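/- arXiv:2211.12541 — 2 statements merged into one kernel-verified Lean document; each statement's English description precedes it below -/
import Mathlib

section
/- For every P ∈ PD(N), the convex function Y ↦ tr(YP) + log ∫_{PSD(N)} e^{−tr(YQ)} dQ (equivalently, Y ↦ tr(YP) − ((N+1)/2)·log det(Y) + log Γ_N((N+1)/2)) on PD(N) attains its infimum, and its unique minimizer is Y* = ((N+1)/2)·P^{−1}. -/
/-!
Fix `k = (N + 1) / 2`. The integral `∫_{PSD(N)} e^{-tr(YQ)} dQ` equals `c · det(Y)^{-k}` with
`0 < c < ∞`, so on `PD(N)` the dual objective is `tr(YP) - k log det Y + log c` (`dualFn_eq`), and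
the minimization reduces to a scalar one over eigenvalues (`trace_logdet`).

*The measure.* The symmetric matrices form a subspace `symSub N` of Euclidean space of dimension
`N(N+1)/2` (`finrank_symSub`). Hausdorff measure of that dimension, restricted to the subspace, is
the image of the Hausdorff measure of the subspace itself, which is a Haar measure; hence `symLeb`
may be replaced by a Haar measure on `symSub N` (`integral_eq_wInt`).

*The determinant formula.* The congruence `Q ↦ A Q Aᵀ` preserves the PSD cone, so the integral at
`Aᵀ Y A` is the integral at `Y` divided by `|det|` of the congruence (`wInt_cong`). In the
coordinates `Q i j`, `i ≤ j`, a diagonal congruence is diagonal, with determinant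
`(∏ dᵢ)^(N+1)` (`det_congMap_diagonal`). For orthogonal `U` the congruence has `|det| = 1`, because
`Uᵀ 1 U = 1` and the integral at `1` is positive and finite. Diagonalizing `Y` gives the formula
(`wInt_eq`). Finiteness at `1` follows from `‖Q‖ ≤ tr Q` on the cone, positivity from the fact that
the cone contains a ball around the identity.

*The minimization.* Write `P = Bᵀ B` and let `l` be the eigenvalues of `B Y Bᵀ`. Then
`tr(YP) - k log det Y = ∑ (lᵢ - k log lᵢ) + k log det P`, and `t - k log t` has `t = k` as its
strict minimizer on `t > 0`. Equality forces `B Y Bᵀ = k • 1`, that is `Y = k • P⁻¹`.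
-/

open MeasureTheory Matrix Filter
open scoped ENNReal NNReal

noncomputable section

/-- Entrywise embedding of matrices into Euclidean space (isometric for the
Frobenius inner product on symmetric matrices). -/
def toEuc (N : ℕ) (P : Matrix (Fin N) (Fin N) ℝ) : EuclideanSpace ℝ (Fin N × Fin N) :=
  (EuclideanSpace.equiv (Fin N × Fin N) ℝ).symm fun p => P p.1 p.2

/-- The inverse identification, reading a matrix off a Euclidean point. -/
def fromEuc (N : ℕ) (x : EuclideanSpace ℝ (Fin N × Fin N)) : Matrix (Fin N) (Fin N) ℝ :=
  Matrix.of fun i j => x (i, j)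

/-- The image of the PSD cone inside Euclidean space. -/
def Epsd (N : ℕ) : Set (EuclideanSpace ℝ (Fin N × Fin N)) :=
  toEuc N '' {Q | Q.PosSemidef}

/-- Lebesgue measure on `Sym(N)` induced by the Frobenius inner product,
realized as the `N(N+1)/2`-dimensional Hausdorff measure on Euclidean space. -/
def symLeb (N : ℕ) : Measure (EuclideanSpace ℝ (Fin N × Fin N)) :=
  μH[(N : ℝ) * ((N : ℝ) + 1) / 2]

/-- The dual objective `Y ↦ tr(YP) + log ∫_{PSD(N)} e^{−tr(YQ)} dQ`. -/
def dualFn (N : ℕ) (P Y : Matrix (Fin N) (Fin N) ℝ) : ℝ :=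
  (Y * P).trace +
    Real.log (∫ x in Epsd N, Real.exp (-(Y * fromEuc N x).trace) ∂symLeb N)

/-! ### The space of symmetric matrices -/

/-- Each index `i` occurs `N - i` times as a first and `i + 1` times as a second component of a pair
`p.1 ≤ p.2`, so `N + 1` times in total. Used both for the dimension of the symmetric matrices and
for the Jacobian of a diagonal congruence. -/
lemma prod_upper {M : Type*} [CommMonoid M] (N : ℕ) (a : Fin N → M) :
    ∏ p : {p : Fin N × Fin N // p.1 ≤ p.2}, (a p.1.1 * a p.1.2) = (∏ i, a i) ^ (N + 1) := by
  rw [Finset.prod_mul_distrib]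
  have h1 : ∏ p : {p : Fin N × Fin N // p.1 ≤ p.2}, a p.1.1 = ∏ i : Fin N, a i ^ (N - i : ℕ) := by
    rw [← Finset.prod_subtype (Finset.univ.filter fun p : Fin N × Fin N => p.1 ≤ p.2) (by simp)
      (fun p => a p.1), Finset.prod_filter, Fintype.prod_prod_type]
    refine Finset.prod_congr rfl fun i _ => ?_
    rw [← Finset.prod_filter]
    change ∏ j ∈ Finset.univ.filter (fun j => i ≤ j), a i = _
    rw [Finset.prod_const]
    congr 1
    rw [← Fin.card_Ici]
    congr 1
    ext; simp
  have h2 : ∏ p : {p : Fin N × Fin N // p.1 ≤ p.2}, a p.1.2 = ∏ i : Fin N, a i ^ (i + 1 : ℕ) := by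
    rw [← Finset.prod_subtype (Finset.univ.filter fun p : Fin N × Fin N => p.1 ≤ p.2) (by simp)
      (fun p => a p.2), Finset.prod_filter, Fintype.prod_prod_type_right]
    refine Finset.prod_congr rfl fun i _ => ?_
    rw [← Finset.prod_filter]
    change ∏ j ∈ Finset.univ.filter (fun j => j ≤ i), a i = _
    rw [Finset.prod_const]
    congr 1
    rw [← Fin.card_Iic]
    congr 1
    ext; simp
  rw [h1, h2, ← Finset.prod_mul_distrib, ← Finset.prod_pow]
  refine Finset.prod_congr rfl fun i _ => ?_
  rw [← pow_add]
  congr 1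
  omega

/-- The symmetric matrices, as a subspace of the Euclidean space of all matrices, from which it
inherits the Frobenius norm. -/
def symSub (N : ℕ) : Submodule ℝ (EuclideanSpace ℝ (Fin N × Fin N)) where
  carrier := {x | ∀ i j, x (i, j) = x (j, i)}
  add_mem' := fun {a b} ha hb i j => by simp [ha i j, hb i j]
  zero_mem' := fun i j => by simp
  smul_mem' := fun c x hx i j => by simp [hx i j]

/-- The entries on and above the diagonal as linear coordinates on the symmetric matrices. -/
def coordEquiv (N : ℕ) : symSub N ≃ₗ[ℝ] ({p : Fin N × Fin N // p.1 ≤ p.2} → ℝ) where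
  toFun v p := v.1 p.1
  invFun f := ⟨WithLp.toLp 2 fun p => if h : p.1 ≤ p.2 then f ⟨p, h⟩
      else f ⟨p.swap, (not_le.mp h).le⟩, fun i j => by
        rcases lt_trichotomy i j with h | h | h
        · simp [h.le, h.not_ge]
        · simp [h]
        · simp [h.le, h.not_ge]⟩
  map_add' _ _ := rfl
  map_smul' _ _ := rfl
  left_inv v := by
    ext ⟨i, j⟩
    by_cases h : i ≤ j
    · simp [h]
    · simpa [h] using v.2 j i
  right_inv f := by
    ext ⟨⟨i, j⟩, h⟩
    have h' : i ≤ j := h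
    simp [h']

lemma finrank_symSub (N : ℕ) :
    (Module.finrank ℝ (symSub N) : ℝ) = (N : ℝ) * ((N : ℝ) + 1) / 2 := by
  rw [(coordEquiv N).finrank_eq, Module.finrank_fintype_fun_eq_card]
  -- With all factors equal to `2` in `ℕ`, `prod_upper` reads `4 ^ card = (2 ^ N) ^ (N + 1)`;
  -- comparing exponents gives the cardinality.
  have h := prod_upper N fun _ => 2
  simp only [Finset.prod_const, Finset.card_univ, Fintype.card_fin] at h
  rw [show 2 * 2 = 2 ^ 2 from rfl, ← pow_mul, ← pow_mul] at h
  have h2 := Nat.pow_right_injective le_rfl h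
  have h3 : (2 : ℝ) * (Fintype.card {p : Fin N × Fin N // p.1 ≤ p.2} : ℝ) = N * (N + 1) := by
    exact_mod_cast h2
  linarith

lemma fromEuc_symm {N : ℕ} (v : symSub N) : (fromEuc N v.1)ᵀ = fromEuc N v.1 := by
  ext i j
  exact v.2 j i

lemma toEuc_mem {N : ℕ} {A : Matrix (Fin N) (Fin N) ℝ} (hA : Aᵀ = A) : toEuc N A ∈ symSub N := by
  intro i j
  change A i j = A j i
  conv_lhs => rw [← hA]
  rfl

@[simp] lemma fromEuc_toEuc {N : ℕ} (A : Matrix (Fin N) (Fin N) ℝ) : fromEuc N (toEuc N A) = A := rfl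

@[simp] lemma toEuc_fromEuc {N : ℕ} (x) : toEuc N (fromEuc N x) = x := rfl

/-! ### Congruences and their determinants -/

/-- The congruence `Q ↦ A Q Aᵀ` as an endomorphism of the space of symmetric matrices. -/
def congMap {N : ℕ} (A : Matrix (Fin N) (Fin N) ℝ) : symSub N →ₗ[ℝ] symSub N where
  toFun v := ⟨toEuc N (A * fromEuc N v.1 * Aᵀ), toEuc_mem (by
    simp [Matrix.transpose_mul, fromEuc_symm, Matrix.mul_assoc])⟩
  map_add' v w := by
    apply Subtype.ext
    have : fromEuc N (v + w : symSub N).1 = fromEuc N v.1 + fromEuc N w.1 := rfl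
    simp only [this, Matrix.mul_add, Matrix.add_mul]
    rfl
  map_smul' c v := by
    apply Subtype.ext
    have : fromEuc N (c • v : symSub N).1 = c • fromEuc N v.1 := rfl
    simp only [this, Matrix.mul_smul, Matrix.smul_mul]
    rfl

lemma fromEuc_congMap {N : ℕ} (A : Matrix (Fin N) (Fin N) ℝ) (v : symSub N) :
    fromEuc N (congMap A v).1 = A * fromEuc N v.1 * Aᵀ := rfl

lemma congMap_mul {N : ℕ} (A B : Matrix (Fin N) (Fin N) ℝ) :
    congMap (A * B) = congMap A * congMap B := by
  apply LinearMap.ext; intro v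
  apply Subtype.ext
  rw [← toEuc_fromEuc (congMap (A * B) v).1, ← toEuc_fromEuc ((congMap A * congMap B) v).1]
  simp [Module.End.mul_apply, fromEuc_congMap, Matrix.transpose_mul, Matrix.mul_assoc]

lemma congMap_one {N : ℕ} : congMap (1 : Matrix (Fin N) (Fin N) ℝ) = 1 := by
  apply LinearMap.ext; intro v
  apply Subtype.ext
  rw [← toEuc_fromEuc (congMap 1 v).1]
  simp [fromEuc_congMap]

lemma isUnit_det_congMap {N : ℕ} {A : Matrix (Fin N) (Fin N) ℝ} (hA : IsUnit A) :
    LinearMap.det (congMap A) ≠ 0 := by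
  obtain ⟨u, rfl⟩ := hA
  intro h
  have : LinearMap.det (congMap (u : Matrix (Fin N) (Fin N) ℝ) * congMap (↑u⁻¹)) = 1 := by
    rw [← congMap_mul]; simp [congMap_one]
  rw [map_mul, h, zero_mul] at this
  exact zero_ne_one this

lemma det_congMap_diagonal {N : ℕ} (d : Fin N → ℝ) :
    LinearMap.det (congMap (Matrix.diagonal d)) = (∏ i, d i) ^ (N + 1) := by
  rw [← LinearMap.det_conj _ (coordEquiv N), ← prod_upper, ← Matrix.det_diagonal,
    ← LinearMap.det_toLin']
  congr 1
  apply LinearMap.ext; intro f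
  obtain ⟨v, rfl⟩ := (coordEquiv N).surjective f
  ext p
  simp only [LinearMap.comp_apply, LinearEquiv.coe_coe, LinearEquiv.symm_apply_apply,
    Matrix.toLin'_apply, Matrix.mulVec_diagonal]
  change (Matrix.diagonal d * fromEuc N v.1 * (Matrix.diagonal d)ᵀ) p.1.1 p.1.2 =
    d p.1.1 * d p.1.2 * v.1 p.1
  simp [Matrix.diagonal_mul, Matrix.mul_diagonal, fromEuc]
  ring

/-! ### The integral over the PSD cone -/

/-- The cone of positive semidefinite matrices inside `symSub N`. -/
def psdSet (N : ℕ) : Set (symSub N) := {v | (fromEuc N v.1).PosSemidef}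

/-- The integral `∫_{PSD(N)} e^{-tr(YQ)} dQ` with respect to the Hausdorff measure of top dimension on
`symSub N`, which is a Haar measure there. -/
def wInt (N : ℕ) (Y : Matrix (Fin N) (Fin N) ℝ) : ℝ :=
  ∫ v in psdSet N, Real.exp (-(Y * fromEuc N v.1).trace) ∂μH[Module.finrank ℝ (symSub N)]

lemma continuous_fromEuc (N : ℕ) : Continuous fun v : symSub N => fromEuc N v.1 := by
  apply continuous_matrix
  intro i j
  change Continuous fun v : symSub N => v.1 (i, j)
  fun_prop

lemma isClosed_psdSet (N : ℕ) : IsClosed (psdSet N) := by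
  have : psdSet N = ⋂ x : Fin N → ℝ, {v | 0 ≤ x ⬝ᵥ (fromEuc N v.1 *ᵥ x)} := by
    ext v
    simp only [Set.mem_iInter, Set.mem_ofPred_eq, psdSet]
    constructor
    · intro h x
      simpa using h.dotProduct_mulVec_nonneg x
    · intro h
      refine .of_dotProduct_mulVec_nonneg ?_ (by simpa using h)
      rw [Matrix.IsHermitian, Matrix.conjTranspose_eq_transpose_of_trivial, fromEuc_symm]
  rw [this]
  refine isClosed_iInter fun x => isClosed_le continuous_const ?_
  have := continuous_fromEuc N
  fun_prop

/-- The inclusion of `symSub N` is an isometry with range containing `Epsd N`, so it carries the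
Hausdorff measure of the subspace to `symLeb N` on that range. -/
lemma integral_eq_wInt (N : ℕ) (Y : Matrix (Fin N) (Fin N) ℝ) :
    ∫ x in Epsd N, Real.exp (-(Y * fromEuc N x).trace) ∂symLeb N = wInt N Y := by
  have hi : Isometry ((↑) : symSub N → EuclideanSpace ℝ (Fin N × Fin N)) := isometry_subtype_coe
  have hemb : MeasurableEmbedding ((↑) : symSub N → EuclideanSpace ℝ (Fin N × Fin N)) :=
    (Submodule.closed_of_finiteDimensional (symSub N)).measurableSet |>
      MeasurableEmbedding.subtype_coe
  have hsub : Epsd N = Subtype.val '' (psdSet N) := by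
    ext x
    constructor
    · rintro ⟨Q, hQ, rfl⟩
      have h := hQ.isHermitian
      rw [Matrix.IsHermitian, Matrix.conjTranspose_eq_transpose_of_trivial] at h
      exact ⟨⟨toEuc N Q, toEuc_mem h⟩, hQ, rfl⟩
    · rintro ⟨v, hv, rfl⟩
      exact ⟨fromEuc N v.1, hv, rfl⟩
  have hm := hi.map_hausdorffMeasure (d := (Module.finrank ℝ (symSub N) : ℝ))
    (Or.inl (Nat.cast_nonneg _))
  have hr : (symLeb N).restrict (Epsd N) =
      (Measure.map Subtype.val (μH[Module.finrank ℝ (symSub N)] : Measure (symSub N))).restrict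
        (Epsd N) := by
    rw [hm, Measure.restrict_restrict_of_subset, symLeb, finrank_symSub]
    rw [hsub]; exact Set.image_subset_range _ _
  rw [hr, hemb.setIntegral_map, wInt, hsub, Set.preimage_image_eq _ Subtype.val_injective]

lemma psdSet_cong {N : ℕ} {A : Matrix (Fin N) (Fin N) ℝ} (hA : IsUnit A) (v : symSub N) :
    congMap A v ∈ psdSet N ↔ v ∈ psdSet N := by
  have := hA.posSemidef_star_right_conjugate_iff (x := fromEuc N v.1)
  rwa [Matrix.star_eq_conjTranspose, Matrix.conjTranspose_eq_transpose_of_trivial] at this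

/-- Change of variables `Q ↦ A Q Aᵀ`, which preserves the cone and turns `tr(YQ)` into
`tr(Aᵀ Y A Q)`. -/
lemma wInt_cong {N : ℕ} {A : Matrix (Fin N) (Fin N) ℝ} (hA : IsUnit A)
    (Y : Matrix (Fin N) (Fin N) ℝ) :
    wInt N (Aᵀ * Y * A) = |(LinearMap.det (congMap A))⁻¹| * wInt N Y := by
  have hd := isUnit_det_congMap hA
  have hm := Measure.map_linearMap_addHaar_eq_smul_addHaar
    (μH[Module.finrank ℝ (symSub N)] : Measure (symSub N)) hd
  have hpre : congMap A ⁻¹' psdSet N = psdSet N := Set.ext fun v => psdSet_cong hA v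
  have hmeas : Measurable (congMap A) := (congMap A).continuous_of_finiteDimensional.measurable
  have hc := continuous_fromEuc N
  have h1 := setIntegral_map (μ := (μH[Module.finrank ℝ (symSub N)] : Measure (symSub N)))
    (f := fun v : symSub N => Real.exp (-(Y * fromEuc N v.1).trace))
    (isClosed_psdSet N).measurableSet
    (Continuous.aestronglyMeasurable (by fun_prop)) hmeas.aemeasurable
  rw [hpre, hm, Measure.restrict_smul, integral_smul_measure,
    ENNReal.toReal_ofReal (abs_nonneg _), smul_eq_mul] at h1
  rw [wInt, wInt, h1]
  congr 1
  ext v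
  rw [fromEuc_congMap]
  congr 2
  rw [← Matrix.mul_assoc Y, Matrix.trace_mul_comm _ Aᵀ]
  simp only [Matrix.mul_assoc]

/-! ### Finiteness and positivity at the identity -/

/-- With `Q = Bᵀ B`, the Cauchy–Schwarz inequality gives `Q i j ^ 2 ≤ Q i i * Q j j`; summing over all
`i, j` bounds the Frobenius norm by the trace. -/
lemma norm_le_trace {N : ℕ} {v : symSub N} (hv : v ∈ psdSet N) :
    ‖v‖ ≤ (fromEuc N v.1).trace := by
  obtain ⟨B, hB⟩ := by
    open scoped MatrixOrder in
    exact CStarAlgebra.nonneg_iff_eq_star_mul_self.mp (Matrix.PosSemidef.nonneg hv)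
  have hent : ∀ i j, v.1 (i, j) = ∑ k, B k i * B k j := fun i j => by
    change fromEuc N v.1 i j = _
    rw [hB]; simp [Matrix.mul_apply]
  have ht : (fromEuc N v.1).trace = ∑ i, ∑ k, B k i ^ 2 := by
    simp only [Matrix.trace, Matrix.diag]
    refine Finset.sum_congr rfl fun i _ => ?_
    change v.1 (i, i) = _
    rw [hent]; simp [sq]
  change ‖v.1‖ ≤ _
  rw [EuclideanSpace.norm_eq]
  refine Real.sqrt_le_iff.mpr ⟨by rw [ht]; positivity, ?_⟩
  rw [ht, sq (∑ i, _), Finset.sum_mul_sum, Fintype.sum_prod_type]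
  refine Finset.sum_le_sum fun i _ => Finset.sum_le_sum fun j _ => ?_
  rw [Real.norm_eq_abs, sq_abs, hent]
  exact Finset.sum_mul_sq_le_sq_mul_sq _ _ _

/-- By `norm_le_trace` the integrand is at most `e^{-‖Q‖}`, which is dominated by a multiple of the
integrable function `(1 + ‖Q‖)^{-n}` with `n` one more than the dimension. -/
lemma integrableOn_exp_trace (N : ℕ) :
    IntegrableOn (fun v : symSub N => Real.exp (-(1 * fromEuc N v.1).trace)) (psdSet N)
      μH[Module.finrank ℝ (symSub N)] := by
  set n := Module.finrank ℝ (symSub N) + 1 with hn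
  have hJ : Integrable (fun v : symSub N => (1 + ‖v‖) ^ (-(n : ℝ)))
      (μH[Module.finrank ℝ (symSub N)] : Measure (symSub N)) :=
    integrable_one_add_norm (by rw [hn]; push_cast; linarith)
  have hc := continuous_fromEuc N
  refine Integrable.mono' ((hJ.const_mul (n.factorial * Real.exp 1)).integrableOn (s := psdSet N))
    (Continuous.aestronglyMeasurable (by fun_prop)) ?_
  refine (ae_restrict_mem (isClosed_psdSet N).measurableSet).mono fun v hv => ?_
  have h1 := norm_le_trace hv
  have h2 := Real.pow_div_factorial_le_exp (x := 1 + ‖v‖) (by positivity) n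
  rw [Real.norm_eq_abs, Real.abs_exp, one_mul, Real.rpow_neg (by positivity), Real.rpow_natCast,
    ← div_eq_mul_inv, le_div_iff₀ (by positivity)]
  rw [div_le_iff₀ (by positivity)] at h2
  calc Real.exp (-(fromEuc N v.1).trace) * (1 + ‖v‖) ^ n
      ≤ Real.exp (-‖v‖) * (Real.exp (1 + ‖v‖) * n.factorial) := by gcongr
    _ = n.factorial * Real.exp 1 := by
      rw [Real.exp_add, Real.exp_neg]; field_simp

/-- If `‖Q - 1‖ < 1` then `|xᵀ (Q - 1) x| ≤ ‖Q - 1‖ |x|² ≤ |x|²` by the Cauchy–Schwarz inequality, so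
`xᵀ Q x ≥ 0`. -/
lemma ball_subset_psdSet (N : ℕ) :
    Metric.ball (⟨toEuc N 1, toEuc_mem Matrix.transpose_one⟩ : symSub N) 1 ⊆ psdSet N := by
  intro v hv
  refine .of_dotProduct_mulVec_nonneg ?_ fun x => ?_
  · rw [Matrix.IsHermitian, Matrix.conjTranspose_eq_transpose_of_trivial, fromEuc_symm]
  rw [Metric.mem_ball, dist_eq_norm] at hv
  set e := v - ⟨toEuc N 1, toEuc_mem Matrix.transpose_one⟩ with he
  have hdec : fromEuc N v.1 = 1 + fromEuc N e.1 := by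
    ext i j
    change v.1 (i, j) = (1 : Matrix (Fin N) (Fin N) ℝ) i j +
      (v.1 (i, j) - (1 : Matrix (Fin N) (Fin N) ℝ) i j)
    ring
  rw [hdec, Matrix.add_mulVec, Matrix.one_mulVec, dotProduct_add]
  have hn : ∑ p : Fin N × Fin N, e.1 p ^ 2 ≤ 1 := by
    have : ‖e.1‖ ≤ 1 := hv.le
    rw [EuclideanSpace.norm_eq] at this
    simpa [Real.sqrt_le_left] using this
  have hq : star x ⬝ᵥ (fromEuc N e.1 *ᵥ x) = ∑ p : Fin N × Fin N, e.1 p * (x p.1 * x p.2) := by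
    simp only [dotProduct, Matrix.mulVec, Fintype.sum_prod_type, Finset.mul_sum]
    refine Finset.sum_congr rfl fun i _ => Finset.sum_congr rfl fun j _ => ?_
    simp [fromEuc]; ring
  have hxx : ∑ p : Fin N × Fin N, (x p.1 * x p.2) ^ 2 = (star x ⬝ᵥ x) ^ 2 := by
    simp only [dotProduct, Fintype.sum_prod_type, sq (∑ i, _), Finset.sum_mul_sum]
    refine Finset.sum_congr rfl fun i _ => Finset.sum_congr rfl fun j _ => ?_
    simp; ring
  have hcs := Finset.sum_mul_sq_le_sq_mul_sq Finset.univ (fun p : Fin N × Fin N => e.1 p)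
    (fun p => x p.1 * x p.2)
  rw [hxx, ← hq] at hcs
  have h0 : 0 ≤ star x ⬝ᵥ x := by
    simp only [dotProduct]; exact Finset.sum_nonneg fun i _ => by simpa using mul_self_nonneg (x i)
  have : |star x ⬝ᵥ (fromEuc N e.1 *ᵥ x)| ≤ star x ⬝ᵥ x :=
    abs_le_of_sq_le_sq (hcs.trans (mul_le_of_le_one_left (sq_nonneg _) hn)) h0
  linarith [neg_le_of_abs_le this]

lemma wInt_one_pos (N : ℕ) : 0 < wInt N 1 := by
  rw [wInt, setIntegral_pos_iff_support_of_nonneg_ae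
    (Filter.Eventually.of_forall fun v => (Real.exp_pos _).le) (integrableOn_exp_trace N)]
  have : Function.support (fun v : symSub N => Real.exp (-(1 * fromEuc N v.1).trace)) = Set.univ :=
    Set.eq_univ_of_forall fun v => (Real.exp_pos _).ne'
  rw [this, Set.univ_inter]
  exact (Metric.measure_ball_pos _ _ one_pos).trans_le (measure_mono (ball_subset_psdSet N))

/-! ### The determinant formula -/

/-- The spectral theorem for a real positive definite matrix, with plain transposes. -/
lemma exists_diag {N : ℕ} {Y : Matrix (Fin N) (Fin N) ℝ} (hY : Y.PosDef) :
    ∃ (U : Matrix (Fin N) (Fin N) ℝ) (l : Fin N → ℝ), U * Uᵀ = 1 ∧ Uᵀ * U = 1 ∧ (∀ i, 0 < l i) ∧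
      Y = U * Matrix.diagonal l * Uᵀ := by
  have h := hY.isHermitian.spectral_theorem
  have hU := hY.isHermitian.eigenvectorUnitary.2
  rw [Unitary.conjStarAlgAut_apply] at h
  rw [Unitary.mem_iff] at hU
  simp only [Matrix.star_eq_conjTranspose, Matrix.conjTranspose_eq_transpose_of_trivial]
    at h hU
  exact ⟨_, _, hU.2, hU.1, hY.eigenvalues_pos, h⟩

lemma isUnit_of_mul_eq_one' {N : ℕ} {A B : Matrix (Fin N) (Fin N) ℝ} (h : A * B = 1) : IsUnit A :=
  ⟨⟨A, B, h, mul_eq_one_comm.mp h⟩, rfl⟩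

/-- Logarithmic form of `∫_{PSD(N)} e^{-tr(YQ)} dQ = c · det(Y)^{-(N+1)/2}`, where `c` is the integral
at `Y = 1`. -/
lemma wInt_eq {N : ℕ} {Y : Matrix (Fin N) (Fin N) ℝ} (hY : Y.PosDef) :
    Real.log (wInt N Y) = Real.log (wInt N 1) - ((N : ℝ) + 1) / 2 * Real.log Y.det := by
  obtain ⟨U, l, h1, h2, hl, rfl⟩ := exists_diag hY
  have hUt : IsUnit Uᵀ := isUnit_of_mul_eq_one' h2
  -- An orthogonal congruence fixes the positive number `wInt N 1`, so its determinant is `±1`;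
  -- no computation of that determinant is needed.
  have hdU : |(LinearMap.det (congMap Uᵀ))⁻¹| = 1 := by
    have := wInt_cong hUt 1
    rw [Matrix.transpose_transpose, Matrix.mul_one, h1] at this
    exact mul_right_cancel₀ (wInt_one_pos N).ne' (by rw [← this, one_mul])
  have hD : wInt N (Matrix.diagonal l) =
      |((∏ i, Real.sqrt (l i)) ^ (N + 1))⁻¹| * wInt N 1 := by
    have hu : IsUnit (Matrix.diagonal fun i => Real.sqrt (l i)) := by
      rw [Matrix.isUnit_iff_isUnit_det, Matrix.det_diagonal, isUnit_iff_ne_zero]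
      exact Finset.prod_ne_zero_iff.mpr fun i _ => (Real.sqrt_pos.mpr (hl i)).ne'
    have := wInt_cong hu 1
    rw [det_congMap_diagonal, Matrix.diagonal_transpose, Matrix.mul_one,
      Matrix.diagonal_mul_diagonal] at this
    rw [← this]
    congr 2
    ext i
    rw [Real.mul_self_sqrt (hl i).le]
  have hs : 0 < ∏ i, Real.sqrt (l i) := Finset.prod_pos fun i _ => Real.sqrt_pos.mpr (hl i)
  have hdet : (U * Matrix.diagonal l * Uᵀ).det = (∏ i, Real.sqrt (l i)) ^ 2 := by
    rw [Matrix.det_mul_right_comm, h1, Matrix.one_mul, Matrix.det_diagonal,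
      ← Finset.prod_pow]
    exact Finset.prod_congr rfl fun i _ => (Real.sq_sqrt (hl i).le).symm
  have hW := wInt_cong hUt (Matrix.diagonal l)
  rw [Matrix.transpose_transpose, hdU, one_mul, hD] at hW
  rw [hW, hdet, Real.log_mul (by positivity) (wInt_one_pos N).ne', Real.log_abs, Real.log_inv,
    Real.log_pow, Real.log_pow]
  push_cast
  ring

lemma dualFn_eq {N : ℕ} {P Y : Matrix (Fin N) (Fin N) ℝ} (hY : Y.PosDef) :
    dualFn N P Y = (Y * P).trace - ((N : ℝ) + 1) / 2 * Real.log Y.det + Real.log (wInt N 1) := by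
  rw [dualFn, integral_eq_wInt, wInt_eq hY]; ring

/-! ### The minimization -/

/-- `t = k` is the strict minimizer of `t - k log t` on `t > 0`, by `log x < x - 1` at `x = t / k`. -/
lemma scalar_lt {k t : ℝ} (hk : 0 < k) (ht : 0 < t) (hne : t ≠ k) :
    k - k * Real.log k < t - k * Real.log t := by
  have h := Real.log_lt_sub_one_of_pos (div_pos ht hk)
    (fun h => hne ((div_eq_one_iff_eq hk.ne').mp h))
  rw [Real.log_div ht.ne' hk.ne'] at h
  have h2 := mul_lt_mul_of_pos_left h hk
  have h3 : k * (t / k - 1) = t - k := by field_simp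
  linarith

lemma scalar_le {k t : ℝ} (hk : 0 < k) (ht : 0 < t) :
    k - k * Real.log k ≤ t - k * Real.log t := by
  by_cases h : t = k
  · rw [h]
  · exact (scalar_lt hk ht h).le

/-- `k • P⁻¹` is the unique minimizer of `tr(YP) - k log det Y` over positive definite `Y`. -/
lemma trace_logdet {N : ℕ} {P : Matrix (Fin N) (Fin N) ℝ} (hP : P.PosDef) {k : ℝ} (hk : 0 < k)
    {Y : Matrix (Fin N) (Fin N) ℝ} (hY : Y.PosDef) :
    ((k • P⁻¹) * P).trace - k * Real.log (k • P⁻¹).det ≤ (Y * P).trace - k * Real.log Y.det ∧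
    ((Y * P).trace - k * Real.log Y.det = ((k • P⁻¹) * P).trace - k * Real.log (k • P⁻¹).det →
      Y = k • P⁻¹) := by
  obtain ⟨B, hB⟩ : ∃ B : Matrix (Fin N) (Fin N) ℝ, P = Bᵀ * B := by
    open scoped MatrixOrder in
    obtain ⟨B, hB⟩ := CStarAlgebra.nonneg_iff_eq_star_mul_self.mp hP.posSemidef.nonneg
    exact ⟨B, by rw [hB, Matrix.star_eq_conjTranspose,
      Matrix.conjTranspose_eq_transpose_of_trivial]⟩
  have hPd : 0 < P.det := hP.det_pos
  have hYd : 0 < Y.det := hY.det_pos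
  have hPu : IsUnit P.det := hPd.ne'.isUnit
  have hBd : B.det ≠ 0 := by
    intro h; rw [hB, Matrix.det_mul, h, mul_zero] at hPd; exact hPd.false
  have hBu : IsUnit B := (Matrix.isUnit_iff_isUnit_det B).mpr hBd.isUnit
  have hM : (B * Y * Bᵀ).PosDef := by
    have := (hBu.posDef_star_right_conjugate_iff (x := Y)).mpr hY
    rwa [Matrix.star_eq_conjTranspose, Matrix.conjTranspose_eq_transpose_of_trivial] at this
  -- `B Y Bᵀ` has the trace of `Y P` and determinant `det Y * det P`.
  obtain ⟨U, l, h1, h2, hl, hMU⟩ := exists_diag hM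
  have htr : (Y * P).trace = ∑ i, l i := by
    rw [← Matrix.trace_diagonal, ← Matrix.one_mul (Matrix.diagonal l), ← h2,
      Matrix.mul_assoc, Matrix.trace_mul_comm Uᵀ, ← hMU, hB, Matrix.mul_assoc B,
      Matrix.trace_mul_comm B, Matrix.mul_assoc]
  have hdet : Y.det * P.det = ∏ i, l i := by
    have := congrArg Matrix.det hMU
    rw [Matrix.det_mul_right_comm, Matrix.det_mul_right_comm U, h1, Matrix.one_mul,
      Matrix.det_diagonal] at this
    rw [← this, hB]
    simp only [Matrix.det_mul]; ring
  have hlog : Real.log Y.det = ∑ i, Real.log (l i) - Real.log P.det := by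
    rw [← Real.log_prod fun i _ => (hl i).ne', ← hdet, Real.log_mul hYd.ne' hPd.ne']; ring
  have hstar : ((k • P⁻¹) * P).trace - k * Real.log (k • P⁻¹).det =
      ∑ _i : Fin N, (k - k * Real.log k) + k * Real.log P.det := by
    rw [Matrix.smul_mul, Matrix.nonsing_inv_mul _ hPu, Matrix.det_smul, Matrix.det_nonsing_inv,
      Ring.inverse_eq_inv', Real.log_mul (pow_ne_zero _ hk.ne') (inv_ne_zero hPd.ne'), Real.log_pow,
      Real.log_inv]
    simp
    ring
  have hval : (Y * P).trace - k * Real.log Y.det =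
      ∑ i, (l i - k * Real.log (l i)) + k * Real.log P.det := by
    rw [htr, hlog, Finset.sum_sub_distrib, ← Finset.mul_sum]; ring
  rw [hstar, hval]
  have hle : ∀ i ∈ Finset.univ, k - k * Real.log k ≤ l i - k * Real.log (l i) :=
    fun i _ => scalar_le hk (hl i)
  refine ⟨by linarith [Finset.sum_le_sum hle], fun heq => ?_⟩
  have heq' := (Finset.sum_eq_sum_iff_of_le hle).mp (by linarith)
  have hlk : l = fun _ => k := by
    ext i
    by_contra hne
    exact (scalar_lt hk (hl i) hne).ne (heq' i (Finset.mem_univ i))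
  have hMk : B * (k⁻¹ • (Y * Bᵀ)) = 1 := by
    rw [Matrix.mul_smul, ← Matrix.mul_assoc, hMU, hlk,
      ← Matrix.smul_one_eq_diagonal, Matrix.mul_smul, Matrix.smul_mul, Matrix.mul_one, h1,
      smul_smul, inv_mul_cancel₀ hk.ne', one_smul]
  rw [mul_eq_one_comm, Matrix.smul_mul, Matrix.mul_assoc, ← hB] at hMk
  have hYP : Y * P = k • 1 := by
    rw [← hMk, smul_smul, mul_inv_cancel₀ hk.ne', one_smul]
  rw [← Matrix.mul_nonsing_inv_cancel_right P Y hPu, hYP, Matrix.smul_mul, Matrix.one_mul]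

/-- Corollary `cor:dual_unique_minimizer`: for `P ∈ PD(N)`, the convex function
`Y ↦ tr(YP) + log ∫_{PSD(N)} e^{−tr(YQ)} dQ` on `PD(N)` attains its infimum,
and its unique minimizer is `Y* = ((N+1)/2)·P⁻¹`. -/
theorem dual_unique_minimizer (N : ℕ) (P : Matrix (Fin N) (Fin N) ℝ) (hP : P.PosDef) :
    ((((N : ℝ) + 1) / 2) • P⁻¹).PosDef ∧
    (∀ Y : Matrix (Fin N) (Fin N) ℝ, Y.PosDef →
      dualFn N P ((((N : ℝ) + 1) / 2) • P⁻¹) ≤ dualFn N P Y) ∧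
    (∀ Y : Matrix (Fin N) (Fin N) ℝ, Y.PosDef →
      dualFn N P Y = dualFn N P ((((N : ℝ) + 1) / 2) • P⁻¹) →
      Y = (((N : ℝ) + 1) / 2) • P⁻¹) := by
  have hk : (0 : ℝ) < ((N : ℝ) + 1) / 2 := by positivity
  have hS : ((((N : ℝ) + 1) / 2) • P⁻¹).PosDef := hP.inv.smul hk
  refine ⟨hS, fun Y hY => ?_, fun Y hY h => ?_⟩
  · rw [dualFn_eq hS, dualFn_eq hY]
    linarith [(trace_logdet hP hk hY).1]
  · rw [dualFn_eq hS, dualFn_eq hY] at h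
    exact (trace_logdet hP hk hY).2 (by linarith)
end
end

section
/- Let q : ℝ^m → ℝ be a positive definite quadratic form. (1) If ω ≥ 3, then ∫_{t : q(t) ≥ ωm} e^{−q(t)} dt ≤ e^{−ωm/2} · ∫_{ℝ^m} e^{−q(t)} dt. (2) If moreover q(t) ≥ λ‖t‖₂² for all t ∈ ℝ^m, then for every a ∈ ℝ^m and ω > 0, ∫_{t : |⟨a,t⟩| > ω‖a‖₂} e^{−q(t)} dt ≤ e^{−λω²} · ∫_{ℝ^m} e^{−q(t)} dt. -/
/-!
Write `Z = ∫ e^{-q}`. Both bounds come from an elementary change of variables.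

* The tail `q ≥ ωm` is an exponential Markov estimate: on it
  `e^{-q(t)} ≤ e^{-3ωm/4} e^{-q(t)/4}`, and rescaling `t ↦ t/2` gives `∫ e^{-q/4} = 2^m Z`. Since
  `log 2 ≤ 3/4 ≤ ω/4`, the factor `2^m` costs at most `e^{ωm/4}`.
* For the tail `|⟨a,t⟩| > ω‖a‖`, each of the two half-spaces is treated separately
  (`halfspace_bound`). Let `c` be the multiple of `Q⁻¹a` with `⟨a,c⟩ = ω‖a‖`; it is the minimiser
  of `q` on the bounding hyperplane, so `q(u+c) ≥ q(u) + q(c)` whenever `⟨a,u⟩ > 0`. Translating by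
  `c` bounds the integral over the half-space by `e^{-q(c)} ∫_{⟨a,u⟩>0} e^{-q(u)}`, and
  `q(c) ≥ λ‖c‖² ≥ λω²` by Cauchy–Schwarz. Adding the bounds for `a` and `-a` gives no
  factor `2`, because the half-spaces `⟨a,u⟩ > 0` and `⟨a,u⟩ < 0` are disjoint.

Integrability of `e^{-q}` follows by factoring `Q = BᵀB` with `B` invertible and pulling back the
standard Gaussian along `B` (`integrable_exp_neg_quadForm`).
-/

open MeasureTheory Matrix

noncomputable section

/-- The factorisation `Q = BᵀB` reduces this to the standard Gaussian, since the linear map `B`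
scales Lebesgue measure by a finite constant. -/
lemma integrable_exp_neg_quadForm {m : ℕ} {Q : Matrix (Fin m) (Fin m) ℝ} (hQ : Q.PosDef) :
    Integrable (fun t : Fin m → ℝ => Real.exp (-(t ⬝ᵥ (Q *ᵥ t)))) := by
  obtain ⟨B, hB⟩ : ∃ B : Matrix (Fin m) (Fin m) ℝ, Q = Bᵀ * B := by
    open scoped MatrixOrder in
    obtain ⟨B, hB⟩ := CStarAlgebra.nonneg_iff_eq_star_mul_self.mp hQ.posSemidef.nonneg
    exact ⟨B, by rw [hB, star_eq_conjTranspose, conjTranspose_eq_transpose_of_trivial]⟩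
  have hdet : B.det ≠ 0 := by
    intro h
    have := hQ.det_pos
    rw [hB, det_mul, h, mul_zero] at this
    exact lt_irrefl _ this
  have h0 : Integrable (fun t : Fin m → ℝ => Real.exp (-∑ i, t i ^ 2)) := by
    have h := (GaussianFourier.integrable_cexp_neg_sum_mul_add (ι := Fin m) (b := fun _ => 1)
      (by simp) (fun _ => 0)).re
    refine h.congr (Filter.Eventually.of_forall fun t => ?_)
    have : (-∑ i, (1 : ℂ) * (t i : ℂ) ^ 2 + ∑ i, (0 : ℂ) * (t i : ℂ))
        = ((-∑ i, t i ^ 2 : ℝ) : ℂ) := by push_cast; simp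
    simp only [this, ← Complex.ofReal_exp]
    exact Complex.ofReal_re _
  have h1 : Integrable (fun t : Fin m → ℝ => Real.exp (-∑ i, t i ^ 2))
      (Measure.map (toLin' B) volume) := by
    rw [Real.map_matrix_volume_pi_eq_smul_volume_pi hdet]
    exact h0.smul_measure ENNReal.ofReal_ne_top
  have h2 := h1.comp_measurable (LinearMap.continuous_of_finiteDimensional (toLin' B)).measurable
  refine h2.congr (Filter.Eventually.of_forall fun t => ?_)
  simp only [Function.comp, toLin'_apply, hB]
  congr 2
  rw [← mulVec_mulVec, dotProduct_mulVec, vecMul_transpose]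
  simp [dotProduct, sq]

lemma quadForm_add {m : ℕ} {Q : Matrix (Fin m) (Fin m) ℝ} (hQ : Q.PosDef) (u c : Fin m → ℝ) :
    (u + c) ⬝ᵥ (Q *ᵥ (u + c)) = u ⬝ᵥ (Q *ᵥ u) + c ⬝ᵥ (Q *ᵥ c) + 2 * (u ⬝ᵥ (Q *ᵥ c)) := by
  have hT : Qᵀ = Q := by
    rw [← conjTranspose_eq_transpose_of_trivial]; exact hQ.isHermitian
  have : c ⬝ᵥ (Q *ᵥ u) = u ⬝ᵥ (Q *ᵥ c) := by
    rw [dotProduct_mulVec, ← mulVec_transpose, hT, dotProduct_comm]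
  rw [mulVec_add, add_dotProduct, dotProduct_add, dotProduct_add, this]
  ring

/-- One-sided form of the second bound, with the integral over the opposite half-space kept out of
the right-hand side so that the estimates for `a` and `-a` can be added without loss. -/
lemma halfspace_bound {m : ℕ} {Q : Matrix (Fin m) (Fin m) ℝ} (hQ : Q.PosDef) {lam : ℝ}
    (hlam0 : 0 ≤ lam) (hlam : ∀ t : Fin m → ℝ, lam * (∑ i, t i ^ 2) ≤ t ⬝ᵥ (Q *ᵥ t))
    (a : Fin m → ℝ) {ω : ℝ} (hω : 0 < ω) :
    (∫ t in {t : Fin m → ℝ | ω * Real.sqrt (∑ i, a i ^ 2) < a ⬝ᵥ t},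
        Real.exp (-(t ⬝ᵥ (Q *ᵥ t)))) ≤
      Real.exp (-(lam * ω ^ 2)) *
        ∫ t in {t : Fin m → ℝ | 0 < a ⬝ᵥ t}, Real.exp (-(t ⬝ᵥ (Q *ᵥ t))) := by
  have hf := integrable_exp_neg_quadForm hQ
  by_cases ha : a = 0
  · subst ha
    simp
  set S := Real.sqrt (∑ i, a i ^ 2) with hS
  have hsum : 0 < ∑ i, a i ^ 2 := by
    obtain ⟨i, hi⟩ := Function.ne_iff.mp ha
    exact Finset.sum_pos' (fun _ _ => sq_nonneg _) ⟨i, Finset.mem_univ _, sq_pos_of_ne_zero hi⟩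
  have hS2 : S ^ 2 = ∑ i, a i ^ 2 := Real.sq_sqrt hsum.le
  have hSpos : 0 < S := Real.sqrt_pos.mpr hsum
  have hD : 0 < a ⬝ᵥ (Q⁻¹ *ᵥ a) := by simpa using hQ.inv.dotProduct_mulVec_pos ha
  set k := ω * S / (a ⬝ᵥ (Q⁻¹ *ᵥ a)) with hk
  have hkpos : 0 < k := by positivity
  set c := k • (Q⁻¹ *ᵥ a) with hc
  have hQc : Q *ᵥ c = k • a := by
    rw [hc, mulVec_smul, mulVec_mulVec,
      mul_nonsing_inv _ ((isUnit_iff_isUnit_det _).mp hQ.isUnit), one_mulVec]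
  have hac : a ⬝ᵥ c = ω * S := by
    rw [hc, dotProduct_smul, smul_eq_mul, hk]
    field_simp
  have hqc : lam * ω ^ 2 ≤ c ⬝ᵥ (Q *ᵥ c) := by
    refine le_trans (mul_le_mul_of_nonneg_left ?_ hlam0) (hlam c)
    have h : (a ⬝ᵥ c) ^ 2 ≤ (∑ i, a i ^ 2) * ∑ i, c i ^ 2 :=
      Finset.sum_mul_sq_le_sq_mul_sq _ _ _
    rw [hac, mul_pow, hS2, mul_comm] at h
    exact le_of_mul_le_mul_left h hsum
  have hcont : Continuous fun t : Fin m → ℝ => a ⬝ᵥ t := by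
    unfold dotProduct; fun_prop
  have hA : MeasurableSet {t : Fin m → ℝ | ω * S < a ⬝ᵥ t} :=
    (isOpen_lt continuous_const hcont).measurableSet
  have hB : MeasurableSet {t : Fin m → ℝ | 0 < a ⬝ᵥ t} :=
    (isOpen_lt continuous_const hcont).measurableSet
  rw [← integral_indicator hA, ← integral_indicator hB, ← integral_const_mul,
    ← integral_add_right_eq_self _ c]
  refine integral_mono ((hf.indicator hA).comp_add_right c) ((hf.indicator hB).const_mul _) ?_
  intro u
  have hiff : u + c ∈ {t : Fin m → ℝ | ω * S < a ⬝ᵥ t} ↔ u ∈ {t : Fin m → ℝ | 0 < a ⬝ᵥ t} := by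
    simp [dotProduct_add, hac]
  by_cases hu : u ∈ {t : Fin m → ℝ | 0 < a ⬝ᵥ t}
  · simp only [Set.indicator_of_mem hu, Set.indicator_of_mem (hiff.mpr hu)]
    rw [← Real.exp_add, Real.exp_le_exp, quadForm_add hQ]
    have : 0 ≤ u ⬝ᵥ (Q *ᵥ c) := by
      rw [hQc, dotProduct_smul, dotProduct_comm]
      exact mul_nonneg hkpos.le (le_of_lt hu)
    linarith
  · simp only [Set.indicator_of_notMem hu, Set.indicator_of_notMem (mt hiff.mp hu), mul_zero,
      le_refl]

lemma two_le_exp_three_quarters : (2 : ℝ) ≤ Real.exp (3 / 4) := by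
  rw [← Real.log_le_iff_le_exp (by norm_num)]
  linarith [Real.log_two_lt_d9]

/-- Lemma 6.2 of Barvinok–Hartigan (`lem:q_bound_int`).  Let
`q(t) = tᵀQt` be a positive definite quadratic form on `ℝ^m`.
(1) If `ω ≥ 3` then `∫_{q(t) ≥ ωm} e^{−q(t)} dt ≤ e^{−ωm/2} ∫_{ℝ^m} e^{−q(t)} dt`.
(2) If moreover `q(t) ≥ λ‖t‖₂²` for all `t`, then for every `a ∈ ℝ^m` and
`ω > 0`, `∫_{|⟨a,t⟩| > ω‖a‖₂} e^{−q(t)} dt ≤ e^{−λω²} ∫_{ℝ^m} e^{−q(t)} dt`. -/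
theorem gaussian_tail_bounds
    (m : ℕ) (Q : Matrix (Fin m) (Fin m) ℝ) (hQ : Q.PosDef) :
    (∀ ω : ℝ, 3 ≤ ω →
      (∫ t in {t : Fin m → ℝ | ω * (m : ℝ) ≤ t ⬝ᵥ (Q *ᵥ t)},
          Real.exp (-(t ⬝ᵥ (Q *ᵥ t)))) ≤
        Real.exp (-(ω * (m : ℝ)) / 2) *
          ∫ t : Fin m → ℝ, Real.exp (-(t ⬝ᵥ (Q *ᵥ t)))) ∧
    (∀ lam : ℝ, (∀ t : Fin m → ℝ, lam * (∑ i, t i ^ 2) ≤ t ⬝ᵥ (Q *ᵥ t)) →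
      ∀ a : Fin m → ℝ, ∀ ω : ℝ, 0 < ω →
      (∫ t in {t : Fin m → ℝ | ω * Real.sqrt (∑ i, a i ^ 2) < |∑ i, a i * t i|},
          Real.exp (-(t ⬝ᵥ (Q *ᵥ t)))) ≤
        Real.exp (-(lam * ω ^ 2)) *
          ∫ t : Fin m → ℝ, Real.exp (-(t ⬝ᵥ (Q *ᵥ t)))) := by
  have hf := integrable_exp_neg_quadForm hQ
  have hnn : ∀ t : Fin m → ℝ, 0 ≤ Real.exp (-(t ⬝ᵥ (Q *ᵥ t))) := fun t => (Real.exp_pos _).le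
  have hZ : 0 ≤ ∫ t : Fin m → ℝ, Real.exp (-(t ⬝ᵥ (Q *ᵥ t))) := integral_nonneg hnn
  refine ⟨fun ω hω => ?_, fun lam hlam a ω hω => ?_⟩
  · have hq : Continuous fun t : Fin m → ℝ => t ⬝ᵥ (Q *ᵥ t) := by
      unfold dotProduct mulVec dotProduct; fun_prop
    have hA : MeasurableSet {t : Fin m → ℝ | ω * (m : ℝ) ≤ t ⬝ᵥ (Q *ᵥ t)} :=
      (isClosed_le continuous_const hq).measurableSet
    set g : (Fin m → ℝ) → ℝ := fun t => Real.exp (-(t ⬝ᵥ (Q *ᵥ t))) with hg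
    have hg2 : Integrable fun t => g ((1 / 2 : ℝ) • t) := hf.comp_smul (by norm_num)
    have hscale : ∫ t, g ((1 / 2 : ℝ) • t) = 2 ^ m * ∫ t, g t := by
      rw [Measure.integral_comp_smul]
      simp
    have hgval : ∀ t, g ((1 / 2 : ℝ) • t) = Real.exp (-(t ⬝ᵥ (Q *ᵥ t)) / 4) := by
      intro t
      simp only [hg, mulVec_smul, dotProduct_smul, smul_dotProduct, smul_eq_mul]
      congr 1; ring
    have h2m : (2 : ℝ) ^ m ≤ Real.exp (ω * m / 4) := by
      calc (2 : ℝ) ^ m ≤ Real.exp (3 / 4) ^ m := by gcongr; exact two_le_exp_three_quarters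
        _ = Real.exp (m * (3 / 4)) := (Real.exp_nat_mul _ _).symm
        _ ≤ _ := by
          rw [Real.exp_le_exp]
          nlinarith [(Nat.cast_nonneg m : (0 : ℝ) ≤ m)]
    calc ∫ t in {t : Fin m → ℝ | ω * (m : ℝ) ≤ t ⬝ᵥ (Q *ᵥ t)}, g t
        ≤ ∫ t in {t : Fin m → ℝ | ω * (m : ℝ) ≤ t ⬝ᵥ (Q *ᵥ t)},
            Real.exp (-(3 / 4 * (ω * m))) * g ((1 / 2 : ℝ) • t) := by
          refine setIntegral_mono_on hf.integrableOn (hg2.const_mul _).integrableOn hA ?_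
          intro t ht
          rw [hgval, ← Real.exp_add]
          simp only [hg, Real.exp_le_exp]
          have : ω * (m : ℝ) ≤ t ⬝ᵥ (Q *ᵥ t) := ht
          linarith
      _ ≤ ∫ t, Real.exp (-(3 / 4 * (ω * m))) * g ((1 / 2 : ℝ) • t) :=
          setIntegral_le_integral (hg2.const_mul _)
            (Filter.Eventually.of_forall fun t => by simp only [hgval]; positivity)
      _ = Real.exp (-(3 / 4 * (ω * m))) * 2 ^ m * ∫ t, g t := by
          rw [integral_const_mul, hscale, mul_assoc]
      _ ≤ Real.exp (-(3 / 4 * (ω * m))) * Real.exp (ω * m / 4) * ∫ t, g t := by gcongr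
      _ = Real.exp (-(ω * (m : ℝ)) / 2) * ∫ t, g t := by
          rw [← Real.exp_add]; congr 2; ring
  · rcases lt_or_ge lam 0 with hneg | hpos
    ·
      -- For `λ < 0` the factor `e^{-λω²}` is at least `1`.
      refine (setIntegral_le_integral hf (Filter.Eventually.of_forall hnn)).trans ?_
      refine le_mul_of_one_le_left hZ (Real.one_le_exp ?_)
      nlinarith [sq_nonneg ω]
    have hcont : Continuous fun t : Fin m → ℝ => a ⬝ᵥ t := by
      unfold dotProduct; fun_prop
    have h1 := halfspace_bound hQ hpos hlam a hω
    have h2 := halfspace_bound hQ hpos hlam (-a) hω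
    simp only [neg_dotProduct, Pi.neg_apply, neg_sq] at h2
    have hAm : MeasurableSet
        {t : Fin m → ℝ | ω * Real.sqrt (∑ i, a i ^ 2) < -(a ⬝ᵥ t)} :=
      (isOpen_lt continuous_const hcont.neg).measurableSet
    have hBm : MeasurableSet {t : Fin m → ℝ | 0 < -(a ⬝ᵥ t)} :=
      (isOpen_lt continuous_const hcont.neg).measurableSet
    have hS : 0 ≤ ω * Real.sqrt (∑ i, a i ^ 2) := by positivity
    have hset : {t : Fin m → ℝ | ω * Real.sqrt (∑ i, a i ^ 2) < |∑ i, a i * t i|} =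
        {t | ω * Real.sqrt (∑ i, a i ^ 2) < a ⬝ᵥ t} ∪
          {t | ω * Real.sqrt (∑ i, a i ^ 2) < -(a ⬝ᵥ t)} := by
      ext t
      exact lt_abs (a := ω * Real.sqrt (∑ i, a i ^ 2)) (b := a ⬝ᵥ t)
    rw [hset, setIntegral_union _ hAm hf.integrableOn hf.integrableOn]
    · have h3 : (∫ t in {t : Fin m → ℝ | 0 < a ⬝ᵥ t}, Real.exp (-(t ⬝ᵥ (Q *ᵥ t)))) +
          (∫ t in {t : Fin m → ℝ | 0 < -(a ⬝ᵥ t)}, Real.exp (-(t ⬝ᵥ (Q *ᵥ t)))) ≤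
          ∫ t : Fin m → ℝ, Real.exp (-(t ⬝ᵥ (Q *ᵥ t))) := by
        rw [← setIntegral_union _ hBm hf.integrableOn hf.integrableOn]
        · exact setIntegral_le_integral hf (Filter.Eventually.of_forall hnn)
        · rw [Set.disjoint_left]
          intro t (ht : 0 < a ⬝ᵥ t) (ht' : 0 < -(a ⬝ᵥ t))
          linarith
      calc _ ≤ _ := add_le_add h1 h2
        _ = _ := (mul_add _ _ _).symm
        _ ≤ _ := mul_le_mul_of_nonneg_left h3 (Real.exp_pos _).le
    · rw [Set.disjoint_left]
      intro t (ht : _ < a ⬝ᵥ t) (ht' : _ < -(a ⬝ᵥ t))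
      linarith
end
end
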